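/- Suppose (u,θ) is a smooth steady state of the 2D semi-dissipative Boussinesq system lying on the parabola ‖u‖²_{H¹} = (g‖θ₀‖_{L²}/ν)‖u‖_{L²}. Then u₁ ≡ 0, both u₂ and θ depend only on x₁, gθ = c u₂ for a constant c of the form c = ν n²π²/L² for some n ∈ ℕ, and u₂(x₁) is an eigenfunction of −∂²_{x₁} with periodic mean-free boundary conditions. -/

import Mathlib

noncomputable section
open MeasureTheory Real Filter Topology
open scoped RealInnerProductSpace

/-- The 2D Euclidean plane (the torus is realized by `L`-periodic functions). -/
abbrev E2 := EuclideanSpace ℝ (Fin 2)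

/-- Standard basis vector. -/
def eb (i : Fin 2) : E2 := EuclideanSpace.single i 1

/-- Partial derivative of a scalar field. -/
def pd (f : E2 → ℝ) (i : Fin 2) (x : E2) : ℝ := fderiv ℝ f x (eb i)

/-- Gradient of a scalar field. -/
def grad (f : E2 → ℝ) (x : E2) : E2 := gradient f x

/-- Laplacian of a scalar field. -/
def lap (f : E2 → ℝ) (x : E2) : ℝ := ∑ i, pd (fun y => pd f i y) i x

/-- Divergence of a vector field. -/
def divg (u : E2 → E2) (x : E2) : ℝ := ∑ i, fderiv ℝ u x (eb i) i

/-- Componentwise Laplacian of a vector field. -/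
def vecLap (u : E2 → E2) (x : E2) : E2 :=
  ∑ j, EuclideanSpace.single j (lap (fun y => u y j) x)

/-- Fundamental domain `[0,L)²` of the torus. -/
def Q (L : ℝ) : Set E2 := {x | ∀ i, x i ∈ Set.Ico (0:ℝ) L}

/-- `L`-periodicity in each coordinate direction. -/
def Periodic2 {α : Type*} (L : ℝ) (f : E2 → α) : Prop := ∀ x i, f (x + L • eb i) = f x

/-- The upward gravity vector `(0, g)`. -/
def gvec (g : ℝ) : E2 := EuclideanSpace.single 1 g

/-- Classical form of the semi-dissipative 2D Boussinesq system on the time set `I`: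
momentum, transport and incompressibility equations. -/
def Boussinesq (ν g L : ℝ) (I : Set ℝ) (u : ℝ → E2 → E2) (θ p : ℝ → E2 → ℝ) : Prop :=
  ∀ t ∈ I, ∀ x : E2,
    deriv (fun s => u s x) t + fderiv ℝ (u t) x (u t x) + grad (p t) x
        = ν • vecLap (u t) x + θ t x • gvec g ∧
    deriv (fun s => θ s x) t + ⟪u t x, grad (θ t) x⟫ = 0 ∧
    divg (u t) x = 0 ∧
    Periodic2 L (u t) ∧ Periodic2 L (θ t) ∧ Periodic2 L (p t)

/-- Squared `L²` norm (on the fundamental domain) of a vector field. -/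
def l2V (L : ℝ) (u : E2 → E2) : ℝ := ∫ x in Q L, ‖u x‖^2

/-- Squared `L²` norm of a scalar field. -/
def l2S (L : ℝ) (f : E2 → ℝ) : ℝ := ∫ x in Q L, (f x)^2

/-- Squared (homogeneous) `H¹` norm of a vector field. -/
def h1V (L : ℝ) (u : E2 → E2) : ℝ := ∫ x in Q L, ∑ i, ‖grad (fun y => u y i) x‖^2

/-- Mean-free scalar field. -/
def MeanFreeS (L : ℝ) (f : E2 → ℝ) : Prop := (∫ x in Q L, f x) = 0

/-- Mean-free vector field. -/
def MeanFreeV (L : ℝ) (u : E2 → E2) : Prop := (∫ x in Q L, u x) = 0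

/-!
Testing the momentum equation with `u` annihilates the gradient part `∇(‖u‖² / 2 + p)`, because `u`
is divergence free, and leaves `ν ‖u‖²_{H¹} = ∫ θ g · u`. On the parabola the right-hand side equals
`‖θ g‖ ‖u‖` in `L²`, so Cauchy–Schwarz is an equality and the buoyancy force `θ g` is `c u` with
`c = ν ‖u‖²_{H¹} / ‖u‖²`. Hence `u₁ = 0`, incompressibility makes `u₂` constant along vertical
lines, and then so is `∂₂p = ν ∂₁²u₂ + c u₂`. By Rolle's theorem `∂₂p` vanishes somewhere on each of
these lines, hence everywhere, and `u₂` solves `-∂₁²u₂ = (c / ν) u₂`. A nonzero `L`-periodic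
solution `w` of `∂²w = -k² w` has `∂w + i k w` proportional to `exp (i k t)`, so `k L ∈ 2π ℕ`.
-/

section Torus

variable {L : ℝ} {V : Type*}

lemma Q_eq_preimage (L : ℝ) : Q L = PiLp.homeomorph 2 _ ⁻¹' Set.univ.pi fun _ => Set.Ico 0 L := by
  ext x
  exact (Set.mem_univ_pi (t := fun _ : Fin 2 => Set.Ico 0 L)).symm

lemma Q_subset_closure_interior (L : ℝ) : Q L ⊆ closure (interior (Q L)) := by
  rw [Q_eq_preimage, ← Homeomorph.preimage_interior, ← Homeomorph.preimage_closure,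
    interior_pi_set Set.finite_univ, closure_pi_set]
  exact Set.preimage_mono (Set.pi_mono fun _ _ => Ico_subset_closure_interior 0 L)

lemma setIntegral_Q_eq_setIntegral_Icc [NormedAddCommGroup V] [NormedSpace ℝ V] (f : E2 → V)
    (L : ℝ) : ∫ x in Q L, f x = ∫ y in Set.Icc 0 fun _ => L, f (WithLp.toLp 2 y) := by
  rw [volume_pi, ← setIntegral_congr_set Measure.univ_pi_Ico_ae_eq_Icc,
    ← (PiLp.volume_preserving_toLp (Fin 2)).setIntegral_preimage_emb
      (MeasurableEquiv.toLp 2 _).measurableEmbedding, Q_eq_preimage]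
  rfl

lemma integrableOn_Q [NormedAddCommGroup V] {f : E2 → V} (hf : Continuous f) (L : ℝ) :
    IntegrableOn f (Q L) := by
  have hK : IsCompact (PiLp.homeomorph 2 _ ⁻¹' Set.univ.pi fun _ : Fin 2 => Set.Icc 0 L) :=
    (Homeomorph.isCompact_preimage _).2 (isCompact_univ_pi fun _ => isCompact_Icc)
  refine (hf.locallyIntegrable.integrableOn_isCompact hK).mono_set ?_
  rw [Q_eq_preimage]
  exact Set.preimage_mono (Set.pi_mono fun _ _ => Set.Ico_subset_Icc_self)

lemma Periodic2.exists_mem_Q {f : E2 → V} (hL : 0 < L) (hf : Periodic2 L f) (x : E2) :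
    ∃ y ∈ Q L, f y = f x := by
  have hper (i : Fin 2) : Function.Periodic f (L • eb i) := (hf · i)
  refine ⟨x - toIcoDiv hL 0 (x 0) • L • eb 0 - toIcoDiv hL 0 (x 1) • L • eb 1, fun i => ?_, by
    rw [(hper 1).sub_zsmul_eq, (hper 0).sub_zsmul_eq]⟩
  have hmem := toIcoMod_mem_Ico hL 0 (x i)
  rw [toIcoMod] at hmem
  fin_cases i <;> simpa [eb] using hmem

lemma Periodic2.eq_zero_of_setIntegral_norm_sq_eq_zero [NormedAddCommGroup V] {f : E2 → V}
    (hL : 0 < L) (hf : Continuous f) (hper : Periodic2 L f) (hint : ∫ x in Q L, ‖f x‖ ^ 2 = 0) :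
    f = 0 := by
  have hae : (fun x => ‖f x‖ ^ 2) =ᵐ[volume.restrict (Q L)] 0 :=
    (setIntegral_eq_zero_iff_of_nonneg_ae (Eventually.of_forall fun x => sq_nonneg ‖f x‖)
      (integrableOn_Q (by fun_prop) L)).1 hint
  have hQ := Measure.eqOn_of_ae_eq hae (by fun_prop) continuousOn_const
    (Q_subset_closure_interior L)
  funext x
  obtain ⟨y, hy, hyx⟩ := hper.exists_mem_Q hL x
  simpa [hyx] using hQ hy

lemma eq_smul_of_sq_setIntegral_inner_eq [NormedAddCommGroup V] [InnerProductSpace ℝ V]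
    {f h : E2 → V} (hL : 0 < L) (hf : Continuous f) (hh : Continuous h)
    (hfper : Periodic2 L f) (hhper : Periodic2 L h) (hne : ∫ x in Q L, ‖h x‖ ^ 2 ≠ 0)
    (heq : (∫ x in Q L, ⟪f x, h x⟫) ^ 2 = (∫ x in Q L, ‖f x‖ ^ 2) * ∫ x in Q L, ‖h x‖ ^ 2)
    (x : E2) : f x = ((∫ y in Q L, ⟪f y, h y⟫) / ∫ y in Q L, ‖h y‖ ^ 2) • h x := by
  set c := (∫ y in Q L, ⟪f y, h y⟫) / ∫ y in Q L, ‖h y‖ ^ 2 with hc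
  have hexpand (y : E2) :
      ‖f y - c • h y‖ ^ 2 = ‖f y‖ ^ 2 - 2 * c * ⟪f y, h y⟫ + c ^ 2 * ‖h y‖ ^ 2 := by
    rw [norm_sub_sq_real, inner_smul_right, norm_smul, mul_pow, norm_eq_abs, sq_abs]
    ring
  have hint : ∫ y in Q L, ‖f y - c • h y‖ ^ 2 = 0 := by
    simp only [hexpand]
    rw [integral_add (integrableOn_Q (by fun_prop) L) (integrableOn_Q (by fun_prop) L),
      integral_sub (integrableOn_Q (by fun_prop) L) (integrableOn_Q (by fun_prop) L),
      integral_const_mul, integral_const_mul, hc]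
    field_simp
    linear_combination -heq
  have hdiff := Periodic2.eq_zero_of_setIntegral_norm_sq_eq_zero hL (by fun_prop)
    (fun y i => by rw [hfper y i, hhper y i]) hint
  exact sub_eq_zero.1 (congrFun hdiff x)

lemma setIntegral_divg_eq_zero {F : E2 → E2} (hL : 0 ≤ L) (hF : ContDiff ℝ 1 F)
    (hper : Periodic2 L F) : ∫ x in Q L, divg F x = 0 := by
  let T := PiLp.continuousLinearEquiv 2 ℝ fun _ : Fin 2 => ℝ
  have hderiv (y : Fin 2 → ℝ) : HasFDerivAt (T ∘ F ∘ T.symm)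
      (T ∘L fderiv ℝ F (T.symm y) ∘L T.symm) y :=
    T.hasFDerivAt.comp y
      ((hF.differentiable one_ne_zero _).hasFDerivAt.comp y T.symm.hasFDerivAt)
  have hcont : Continuous fun y => divg F (T.symm y) := by
    have := hF.continuous_fderiv one_ne_zero
    unfold divg
    fun_prop
  have hface (i : Fin 2) (y : Fin 1 → ℝ) :
      T.symm (i.insertNth L y) = T.symm (i.insertNth 0 y) + L • eb i := by
    ext j
    refine i.succAboveCases ?_ (fun k => ?_) j <;> simp [T, eb]
  rw [setIntegral_Q_eq_setIntegral_Icc]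
  refine (integral_divergence_of_hasFDerivAt_off_countable 0 (fun _ => L) (fun _ => hL)
    (T ∘ F ∘ T.symm) _ ∅ Set.countable_empty
    (fun y _ => (hderiv y).continuousAt.continuousWithinAt) (fun y _ => hderiv y)
    (hcont.continuousOn.integrableOn_compact isCompact_Icc)).trans ?_
  simp only [Function.comp_apply, hface, hper _ _, Pi.zero_apply, sub_self,
    Finset.sum_const_zero]

end Torus

section VectorCalculus

variable {f : E2 → ℝ} {F : E2 → E2} {x : E2}

lemma fderiv_coord (hF : DifferentiableAt ℝ F x) (i : Fin 2) (v : E2) :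
    fderiv ℝ (fun y => F y i) x v = fderiv ℝ F x v i := by
  have hcoord := (EuclideanSpace.proj (𝕜 := ℝ) i).hasFDerivAt.comp x hF.hasFDerivAt
  exact congrArg (· v) hcoord.fderiv

lemma inner_grad (f : E2 → ℝ) (x v : E2) : ⟪grad f x, v⟫ = fderiv ℝ f x v :=
  inner_gradient_left

lemma grad_apply (f : E2 → ℝ) (x : E2) (i : Fin 2) : grad f x i = pd f i x := by
  rw [pd, ← inner_grad, eb, EuclideanSpace.inner_single_right]
  simp

lemma fderiv_eq_sum_pd (f : E2 → ℝ) (x v : E2) : fderiv ℝ f x v = ∑ j, v j * pd f j x := by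
  simp only [← inner_grad, PiLp.inner_apply, grad_apply, RCLike.inner_apply, conj_trivial]

lemma divg_eq_sum_pd (hF : DifferentiableAt ℝ F x) :
    divg F x = ∑ i, pd (fun y => F y i) i x := by
  simp only [divg, pd, fderiv_coord hF]

lemma inner_vecLap (F : E2 → E2) (x v : E2) :
    ⟪vecLap F x, v⟫ = ∑ j, lap (fun y => F y j) x * v j := by
  simp [vecLap, PiLp.inner_apply, mul_comm]

lemma divg_grad (hf : DifferentiableAt ℝ (grad f) x) : divg (grad f) x = lap f x := by
  simp only [divg_eq_sum_pd hf, lap, grad_apply]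

lemma divg_smul (hf : DifferentiableAt ℝ f x) (hF : DifferentiableAt ℝ F x) :
    divg (fun y => f y • F y) x = f x * divg F x + ⟪grad f x, F x⟫ := by
  simp only [divg, fderiv_fun_smul hf hF, inner_grad, fderiv_eq_sum_pd f x (F x), Finset.mul_sum,
    ← Finset.sum_add_distrib]
  exact Finset.sum_congr rfl fun i _ => by simp [pd, mul_comm]

lemma inner_grad_half_norm_sq_add (hF : DifferentiableAt ℝ F x) (hf : DifferentiableAt ℝ f x)
    (v : E2) :
    ⟪grad (fun y => ‖F y‖ ^ 2 / 2 + f y) x, v⟫ = ⟪fderiv ℝ F x v, F x⟫ + ⟪grad f x, v⟫ := by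
  have hderiv := (hF.hasFDerivAt.norm_sq.mul_const (1 / 2)).add hf.hasFDerivAt
  simp only [inner_grad, div_eq_mul_one_div (‖F _‖ ^ 2)]
  refine (congrArg (· v) hderiv.fderiv).trans ?_
  simp [real_inner_comm]

lemma contDiff_grad {n : WithTop ℕ∞} (hf : ContDiff ℝ (n + 1) f) : ContDiff ℝ n (grad f) :=
  (InnerProductSpace.toDual ℝ E2).symm.contDiff.comp (hf.fderiv_right le_rfl)

lemma contDiff_pd {n : WithTop ℕ∞} (hf : ContDiff ℝ (n + 1) f) (i : Fin 2) :
    ContDiff ℝ n (pd f i) :=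
  (hf.fderiv_right le_rfl).clm_apply contDiff_const

lemma periodic_pd {c : E2} (hf : Function.Periodic f c) (i : Fin 2) :
    Function.Periodic (pd f i) c := fun x => by
  rw [pd, ← fderiv_comp_add_right, funext hf, pd]

lemma periodic_grad {c : E2} (hf : Function.Periodic f c) : Function.Periodic (grad f) c :=
  fun x => by
    ext i
    simp only [grad_apply, periodic_pd hf i x]

lemma eq_of_grad_eq_zero (hf : Differentiable ℝ f) (hgrad : ∀ x, grad f x = 0) (x y : E2) :
    f x = f y :=
  is_const_of_fderiv_eq_zero hf
    (fun z => ContinuousLinearMap.ext fun v => by simp [← inner_grad, hgrad]) x y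

lemma hasDerivAt_line (hf : Differentiable ℝ f) (x : E2) (i : Fin 2) (t : ℝ) :
    HasDerivAt (fun s : ℝ => f (x + s • eb i)) (pd f i (x + t • eb i)) t := by
  have hline : HasDerivAt (fun s : ℝ => x + s • eb i) (eb i) t := by
    simpa using ((hasDerivAt_id t).smul_const (eb i)).const_add x
  exact (hf _).hasFDerivAt.comp_hasDerivAt t hline

lemma periodic_smul_eb_of_pd_eq_zero (hf : Differentiable ℝ f) {i : Fin 2}
    (hpd : ∀ x, pd f i x = 0) (t : ℝ) : Function.Periodic f (t • eb i) := fun x => by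
  have hderiv := hasDerivAt_line hf x i
  simpa using is_const_of_deriv_eq_zero (fun s => (hderiv s).differentiableAt)
    (fun s => (hderiv s).deriv.trans (hpd _)) t 0

lemma Periodic2.exists_pd_line_eq_zero {L : ℝ} (hL : 0 < L) (hf : Differentiable ℝ f)
    (hper : Periodic2 L f) (x : E2) (i : Fin 2) : ∃ t : ℝ, pd f i (x + t • eb i) = 0 := by
  obtain ⟨t, -, ht⟩ := exists_hasDerivAt_eq_zero hL
    (fun t _ => (hasDerivAt_line hf x i t).continuousAt.continuousWithinAt)
    (by simpa using (hper x i).symm) (fun t _ => hasDerivAt_line hf x i t)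
  exact ⟨t, ht⟩

end VectorCalculus

section IntegralIdentities

variable {L : ℝ} {f h : E2 → ℝ} {F u : E2 → E2}

lemma setIntegral_inner_grad_eq_zero (hL : 0 ≤ L) (hf : ContDiff ℝ 1 f) (hF : ContDiff ℝ 1 F)
    (hfper : Periodic2 L f) (hFper : Periodic2 L F) (hdiv : ∀ x, divg F x = 0) :
    ∫ x in Q L, ⟪grad f x, F x⟫ = 0 := by
  have hflux (x : E2) : divg (fun y => f y • F y) x = ⟪grad f x, F x⟫ := by
    rw [divg_smul (hf.differentiable one_ne_zero x) (hF.differentiable one_ne_zero x), hdiv,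
      mul_zero, zero_add]
  simp only [← hflux]
  exact setIntegral_divg_eq_zero hL (hf.smul hF) fun x i => by rw [hfper x i, hFper x i]

lemma continuous_lap (hf : ContDiff ℝ 2 f) : Continuous (lap f) :=
  continuous_finsetSum _ fun i _ => (contDiff_pd (n := 0) (contDiff_pd hf i) i).continuous

lemma setIntegral_lap_mul (hL : 0 ≤ L) (hf : ContDiff ℝ 2 f) (hh : ContDiff ℝ 1 h)
    (hfper : Periodic2 L f) (hhper : Periodic2 L h) :
    ∫ x in Q L, lap f x * h x = -∫ x in Q L, ⟪grad f x, grad h x⟫ := by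
  have hgrad : ContDiff ℝ 1 (grad f) := contDiff_grad hf
  have hgradh : ContDiff ℝ 0 (grad h) := contDiff_grad hh
  have hflux (x : E2) :
      divg (fun y => h y • grad f y) x = lap f x * h x + ⟪grad f x, grad h x⟫ := by
    rw [divg_smul (hh.differentiable one_ne_zero x) (hgrad.differentiable one_ne_zero x),
      divg_grad (hgrad.differentiable one_ne_zero x), real_inner_comm, mul_comm]
  have hzero := setIntegral_divg_eq_zero hL (hh.smul hgrad) fun x i => by
    rw [Pi.smul_apply', Pi.smul_apply', hhper x i, periodic_grad (hfper · i) x]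
  have hlap := continuous_lap hf
  have := hh.continuous
  have := hgrad.continuous
  have := hgradh.continuous
  simp only [Pi.smul_def', hflux] at hzero
  rw [integral_add (integrableOn_Q (by fun_prop) L) (integrableOn_Q (by fun_prop) L)] at hzero
  exact eq_neg_of_add_eq_zero_left hzero

lemma h1V_eq_sum (hu : ContDiff ℝ 1 u) (L : ℝ) :
    h1V L u = ∑ i, ∫ x in Q L, ‖grad (fun y => u y i) x‖ ^ 2 := by
  refine integral_finsetSum _ fun i _ => integrableOn_Q ?_ L
  exact (contDiff_grad (n := 0) (contDiff_euclidean.1 hu i)).continuous.norm.pow 2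

lemma setIntegral_inner_vecLap (hL : 0 ≤ L) (hu : ContDiff ℝ 2 u) (hper : Periodic2 L u) :
    ∫ x in Q L, ⟪vecLap u x, u x⟫ = -h1V L u := by
  have hcoord := contDiff_euclidean.1 hu
  have hcoordper (i : Fin 2) : Periodic2 L fun y => u y i :=
    fun x j => congrArg (· i) (hper x j)
  simp only [inner_vecLap]
  rw [integral_finsetSum _ fun i _ => integrableOn_Q
      (f := fun x => lap (fun y => u y i) x * u x i)
      ((continuous_lap (hcoord i)).mul (hcoord i).continuous) L,
    h1V_eq_sum (hu.of_le one_le_two), ← Finset.sum_neg_distrib]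
  refine Finset.sum_congr rfl fun i _ => ?_
  rw [setIntegral_lap_mul hL (hcoord i) ((hcoord i).of_le one_le_two) (hcoordper i)
    (hcoordper i)]
  simp only [real_inner_self_eq_norm_sq]

lemma eq_of_h1V_eq_zero (hL : 0 < L) (hu : ContDiff ℝ 1 u) (hper : Periodic2 L u)
    (hzero : h1V L u = 0) (x y : E2) : u x = u y := by
  have hcoord := contDiff_euclidean.1 hu
  rw [h1V_eq_sum hu, Finset.sum_eq_zero_iff_of_nonneg fun i _ =>
    integral_nonneg fun x => sq_nonneg _] at hzero
  ext i
  refine eq_of_grad_eq_zero ((hcoord i).differentiable one_ne_zero) (congrFun ?_) x y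
  refine Periodic2.eq_zero_of_setIntegral_norm_sq_eq_zero hL
    (contDiff_grad (n := 0) (hcoord i)).continuous (fun z j => ?_)
    (hzero i (Finset.mem_univ i))
  exact periodic_grad (fun y => congrArg (· i) (hper y j)) z

lemma MeanFreeV.eq_zero_of_h1V_eq_zero (hmean : MeanFreeV L u) (hL : 0 < L)
    (hu : ContDiff ℝ 1 u) (hper : Periodic2 L u) (hzero : h1V L u = 0) : u = 0 := by
  refine hper.eq_zero_of_setIntegral_norm_sq_eq_zero hL hu.continuous ?_
  calc
    ∫ x in Q L, ‖u x‖ ^ 2 = ∫ x in Q L, ⟪u 0, u x⟫ := by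
      simp only [← real_inner_self_eq_norm_sq, eq_of_h1V_eq_zero hL hu hper hzero _ 0]
    _ = ⟪u 0, ∫ x in Q L, u x⟫ := integral_inner (integrableOn_Q hu.continuous L) _
    _ = 0 := by rw [hmean, inner_zero_right]

lemma Periodic2.l2V_pos (hper : Periodic2 L u) (hL : 0 < L) (hu : Continuous u) (hne : u ≠ 0) :
    0 < l2V L u :=
  (integral_nonneg fun x => sq_nonneg ‖u x‖).lt_of_ne' fun hzero =>
    hne (hper.eq_zero_of_setIntegral_norm_sq_eq_zero hL hu hzero)

lemma MeanFreeV.h1V_pos (hmean : MeanFreeV L u) (hL : 0 < L) (hu : ContDiff ℝ 1 u)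
    (hper : Periodic2 L u) (hne : u ≠ 0) : 0 < h1V L u :=
  (integral_nonneg fun _ => Finset.sum_nonneg fun _ _ => sq_nonneg _).lt_of_ne' fun hzero =>
    hne (hmean.eq_zero_of_h1V_eq_zero hL hu hper hzero)

end IntegralIdentities

section Oscillator

lemma eq_exp_mul_of_hasDerivAt {a : ℂ} {f : ℝ → ℂ} (hf : ∀ t, HasDerivAt f (a * f t) t) (t : ℝ) :
    f t = Complex.exp (a * t) * f 0 := by
  have hexp (t : ℝ) : HasDerivAt (fun s : ℝ => Complex.exp (-(a * s)))
      (Complex.exp (-(a * t)) * -a) t := by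
    simpa using ((hasDerivAt_id t).ofReal_comp.const_mul a).neg.cexp
  have hconst (t : ℝ) : HasDerivAt (fun s : ℝ => Complex.exp (-(a * s)) * f s) 0 t :=
    ((hexp t).mul (hf t)).congr_deriv (by ring)
  have heq : Complex.exp (-(a * t)) * f t = f 0 := by
    simpa using is_const_of_deriv_eq_zero (fun t => (hconst t).differentiableAt)
      (fun t => (hconst t).deriv) t 0
  rw [← heq, ← mul_assoc, ← Complex.exp_add, add_neg_cancel, Complex.exp_zero, one_mul]

lemma exists_nat_of_oscillator {k L : ℝ} (hk : 0 < k) (hL : 0 < L) {w w' : ℝ → ℝ}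
    (hw : ∀ t, HasDerivAt w (w' t) t) (hw' : ∀ t, HasDerivAt w' (-(k ^ 2 * w t)) t)
    (hper : w L = w 0) (hper' : w' L = w' 0) (hne : w 0 ≠ 0) :
    ∃ n : ℕ, k * L = n * (2 * π) := by
  let f (t : ℝ) : ℂ := w' t + k * Complex.I * w t
  have hf (t : ℝ) : HasDerivAt f (k * Complex.I * f t) t := by
    refine ((hw' t).ofReal_comp.add ((hw t).ofReal_comp.const_mul _)).congr_deriv ?_
    push_cast
    linear_combination (-(k : ℂ) ^ 2 * w t) * Complex.I_sq
  have hf0 : f 0 ≠ 0 := fun h => by simpa [f, hk.ne', hne] using congrArg Complex.im h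
  have hexp : Complex.exp (k * Complex.I * L) = 1 := by
    have hfL : f L = f 0 := by simp only [f, hper, hper']
    rwa [eq_exp_mul_of_hasDerivAt hf L, mul_eq_right₀ hf0] at hfL
  obtain ⟨n, hn⟩ := Complex.exp_eq_one_iff.1 hexp
  have hkL : k * L = n * (2 * π) := by simpa [mul_right_comm] using congrArg Complex.im hn
  have hn0 : 0 ≤ n := by
    have : (0 : ℝ) < n := pos_of_mul_pos_left (hkL ▸ mul_pos hk hL) two_pi_pos.le
    exact_mod_cast this.le
  lift n to ℕ using hn0
  exact ⟨n, hkL⟩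

lemma Periodic2.exists_nat_eigenvalue_eq {L lam : ℝ} {f : E2 → ℝ} (hper : Periodic2 L f)
    (hL : 0 < L) (hlam : 0 < lam) (hf : ContDiff ℝ 2 f) (i : Fin 2)
    (heig : ∀ x, pd (pd f i) i x = -(lam * f x)) (hne : f ≠ 0) :
    ∃ n : ℕ, lam = (n * (2 * π) / L) ^ 2 := by
  obtain ⟨x, hx⟩ := Function.ne_iff.1 hne
  obtain ⟨n, hn⟩ := exists_nat_of_oscillator (sqrt_pos.2 hlam) hL
    (hasDerivAt_line (hf.differentiable two_ne_zero) x i)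
    (fun t => by
      rw [sq_sqrt hlam.le, ← heig]
      exact hasDerivAt_line ((contDiff_pd hf i).differentiable one_ne_zero) x i t)
    (by simpa using hper x i) (by simpa using periodic_pd (hper · i) i x) (by simpa using hx)
  exact ⟨n, by rw [← hn, mul_div_cancel_right₀ _ hL.ne', sq_sqrt hlam.le]⟩

end Oscillator

/-- A classical steady solution of the momentum and incompressibility equations of the Boussinesq
system on the torus, for a prescribed temperature `θ`. -/
structure SteadyFlow (ν g L : ℝ) (u : E2 → E2) (θ p : E2 → ℝ) : Prop where
  contDiff_velocity : ContDiff ℝ 2 u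
  continuous_temperature : Continuous θ
  contDiff_pressure : ContDiff ℝ 1 p
  periodic_velocity : Periodic2 L u
  periodic_temperature : Periodic2 L θ
  periodic_pressure : Periodic2 L p
  momentum : ∀ x, fderiv ℝ u x (u x) + grad p x = ν • vecLap u x + θ x • gvec g
  divg_eq_zero : ∀ x, divg u x = 0

lemma Boussinesq.steadyFlow {ν g L : ℝ} {u : E2 → E2} {θ p : E2 → ℝ}
    (hsol : Boussinesq ν g L Set.univ (fun _ => u) (fun _ => θ) (fun _ => p))
    (hu : ContDiff ℝ 2 u) (hθ : Continuous θ) (hp : ContDiff ℝ 1 p) :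
    SteadyFlow ν g L u θ p where
  contDiff_velocity := hu
  continuous_temperature := hθ
  contDiff_pressure := hp
  periodic_velocity := (hsol 0 trivial 0).2.2.2.1
  periodic_temperature := (hsol 0 trivial 0).2.2.2.2.1
  periodic_pressure := (hsol 0 trivial 0).2.2.2.2.2
  momentum x := by simpa using (hsol 0 trivial x).1
  divg_eq_zero x := (hsol 0 trivial x).2.2.1

namespace SteadyFlow

variable {ν g L lam : ℝ} {u : E2 → E2} {θ p : E2 → ℝ}

lemma differentiable_velocity (h : SteadyFlow ν g L u θ p) : Differentiable ℝ u :=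
  h.contDiff_velocity.differentiable two_ne_zero

lemma energy_balance (h : SteadyFlow ν g L u θ p) (hL : 0 ≤ L) :
    ν * h1V L u = ∫ x in Q L, ⟪θ x • gvec g, u x⟫ := by
  have hu1 : ContDiff ℝ 1 u := h.contDiff_velocity.of_le one_le_two
  have hbernoulli : ∫ x in Q L, ⟪grad (fun y => ‖u y‖ ^ 2 / 2 + p y) x, u x⟫ = 0 :=
    setIntegral_inner_grad_eq_zero hL (((hu1.norm_sq ℝ).div_const 2).add h.contDiff_pressure) hu1
      (fun x i => by rw [h.periodic_velocity x i, h.periodic_pressure x i]) h.periodic_velocity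
      h.divg_eq_zero
  have hvisc : Continuous fun x => ⟪vecLap u x, u x⟫ := by
    have hlap (i : Fin 2) := continuous_lap (contDiff_euclidean.1 h.contDiff_velocity i)
    have := hu1.continuous
    simp only [inner_vecLap]
    fun_prop
  have hbuoy : Continuous fun x => ⟪θ x • gvec g, u x⟫ :=
    (h.continuous_temperature.smul continuous_const).inner hu1.continuous
  have hpower (x : E2) : ⟪grad (fun y => ‖u y‖ ^ 2 / 2 + p y) x, u x⟫ =
      ν * ⟪vecLap u x, u x⟫ + ⟪θ x • gvec g, u x⟫ := by
    rw [inner_grad_half_norm_sq_add (h.differentiable_velocity x)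
      (h.contDiff_pressure.differentiable one_ne_zero x), ← inner_add_left, h.momentum,
      inner_add_left, real_inner_smul_left]
  simp only [hpower] at hbernoulli
  rw [integral_add ((integrableOn_Q hvisc L).const_mul ν) (integrableOn_Q hbuoy L),
    integral_const_mul, setIntegral_inner_vecLap hL h.contDiff_velocity h.periodic_velocity]
    at hbernoulli
  linarith

lemma buoyancy_eq_smul_velocity (h : SteadyFlow ν g L u θ p) (hν : ν ≠ 0) (hL : 0 < L)
    (hne : l2V L u ≠ 0) (hparab : h1V L u = (g * √(l2S L θ) / ν) * √(l2V L u)) (x : E2) :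
    θ x • gvec g = (ν * (h1V L u / l2V L u)) • u x := by
  have hparab_sq : (ν * h1V L u) ^ 2 = g ^ 2 * l2S L θ * l2V L u := by
    have hl2S : 0 ≤ l2S L θ := integral_nonneg fun x => sq_nonneg (θ x)
    have hl2V : 0 ≤ l2V L u := integral_nonneg fun x => sq_nonneg ‖u x‖
    rw [hparab, ← mul_assoc, mul_div_cancel₀ _ hν, mul_pow, mul_pow, sq_sqrt hl2S, sq_sqrt hl2V]
  have hbuoy_sq : ∫ x in Q L, ‖θ x • gvec g‖ ^ 2 = g ^ 2 * l2S L θ := by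
    simp [l2S, gvec, norm_smul, mul_pow, mul_comm, integral_const_mul]
  rw [← mul_div_assoc, h.energy_balance hL.le]
  rw [h.energy_balance hL.le] at hparab_sq
  exact eq_smul_of_sq_setIntegral_inner_eq (f := fun x => θ x • gvec g) hL
    (h.continuous_temperature.smul continuous_const) h.contDiff_velocity.continuous
    (fun x i => congrArg (· • gvec g) (h.periodic_temperature x i)) h.periodic_velocity hne
    (by rw [hbuoy_sq, hparab_sq, l2V]) x

lemma pd_one_vertical_eq_zero (h : SteadyFlow ν g L u θ p) (hu0 : ∀ x, u x 0 = 0) (x : E2) :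
    pd (fun y => u y 1) 1 x = 0 := by
  have hdiv := h.divg_eq_zero x
  rw [divg_eq_sum_pd (h.differentiable_velocity x), Fin.sum_univ_two] at hdiv
  simpa [hu0, pd] using hdiv

lemma periodic_vertical (h : SteadyFlow ν g L u θ p) (hu0 : ∀ x, u x 0 = 0) (t : ℝ) :
    Function.Periodic (fun x => u x 1) (t • eb 1) :=
  periodic_smul_eb_of_pd_eq_zero
    ((contDiff_euclidean.1 h.contDiff_velocity 1).differentiable two_ne_zero)
    (h.pd_one_vertical_eq_zero hu0) t

lemma pd_one_pressure (h : SteadyFlow ν g L u θ p) (hu0 : ∀ x, u x 0 = 0) (x : E2) :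
    pd p 1 x = ν * pd (pd (fun y => u y 1) 0) 0 x + θ x * g := by
  have hpd1 : pd (fun y => u y 1) 1 = fun _ => 0 := funext (h.pd_one_vertical_eq_zero hu0)
  have hadv : fderiv ℝ u x (u x) 1 = 0 := by
    rw [← fderiv_coord (h.differentiable_velocity x), fderiv_eq_sum_pd]
    simp [hu0, hpd1]
  have hlap : vecLap u x 1 = pd (pd (fun y => u y 1) 0) 0 x := by
    have hconst : pd (fun _ => 0) 1 x = 0 := by simp [pd]
    simp [vecLap, lap, hpd1, hconst]
  simpa [hadv, hlap, grad_apply, gvec] using congrArg (· 1) (h.momentum x)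

lemma vertical_eigenfunction (h : SteadyFlow ν g L u θ p) (hν : ν ≠ 0) (hL : 0 < L)
    (hu0 : ∀ x, u x 0 = 0) (hθ : ∀ x, g * θ x = ν * lam * u x 1) (x : E2) :
    pd (pd (fun y => u y 1) 0) 0 x = -(lam * u x 1) := by
  have hgrad (y : E2) : pd p 1 y = ν * (pd (pd (fun y => u y 1) 0) 0 y + lam * u y 1) := by
    rw [h.pd_one_pressure hu0, mul_comm (θ y), hθ, mul_add, mul_assoc]
  obtain ⟨t, ht⟩ := h.periodic_pressure.exists_pd_line_eq_zero hL
    (h.contDiff_pressure.differentiable one_ne_zero) x 1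
  have hper := h.periodic_vertical hu0 t
  have hux : u (x + t • eb 1) 1 = u x 1 := hper x
  rw [hgrad, periodic_pd (periodic_pd hper 0) 0 x, hux] at ht
  exact eq_neg_of_add_eq_zero_left ((mul_eq_zero.1 ht).resolve_left hν)

lemma vertical_eq_of_apply_zero_eq (h : SteadyFlow ν g L u θ p) (hu0 : ∀ x, u x 0 = 0) {x y : E2}
    (hxy : x 0 = y 0) : u x 1 = u y 1 := by
  have hx : x = y + (x 1 - y 1) • eb 1 := by
    ext j
    fin_cases j <;> simp [eb, hxy]
  rw [hx]
  exact h.periodic_vertical hu0 _ y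

lemma exists_nat_eigenvalue_eq (h : SteadyFlow ν g L u θ p) (hν : ν ≠ 0) (hL : 0 < L)
    (hlam : 0 < lam) (hu0 : ∀ x, u x 0 = 0) (hθ : ∀ x, g * θ x = ν * lam * u x 1) (hu : u ≠ 0) :
    ∃ n : ℕ, lam = (n * (2 * π) / L) ^ 2 := by
  have hvertical : (fun y => u y 1) ≠ 0 := fun hzero => hu <| by
    ext x i
    fin_cases i
    exacts [hu0 x, congrFun hzero x]
  exact Periodic2.exists_nat_eigenvalue_eq
    (fun x i => congrArg (· 1) (h.periodic_velocity x i)) hL hlam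
    (contDiff_euclidean.1 h.contDiff_velocity 1) 0 (h.vertical_eigenfunction hν hL hu0 hθ) hvertical

end SteadyFlow

theorem steady_states_on_parabola_general {ν g L : ℝ} (hν : ν ≠ 0) (hL : 0 < L) {u : E2 → E2}
    {θ p : E2 → ℝ} (h : SteadyFlow ν g L u θ p) (hu_mf : MeanFreeV L u) (hu_ne : ∃ x, u x ≠ 0)
    (hparab : h1V L u = (g * √(l2S L θ) / ν) * √(l2V L u)) :
    (∀ x : E2, u x 0 = 0) ∧
    (∀ x y : E2, x 0 = y 0 → u x 1 = u y 1 ∧ θ x = θ y) ∧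
    (∃ (c : ℝ) (n : ℕ), c = ν * (n : ℝ) ^ 2 * π ^ 2 / L ^ 2 ∧
      (∀ x : E2, g * θ x = c * u x 1) ∧
      (∀ x : E2, -(pd (fun y => pd (fun w => u w 1) 0 y) 0 x) = (c / ν) * u x 1)) := by
  have hu : u ≠ 0 := Function.ne_iff.2 hu_ne
  have hl2V : 0 < l2V L u := h.periodic_velocity.l2V_pos hL h.contDiff_velocity.continuous hu
  have hh1V : 0 < h1V L u :=
    hu_mf.h1V_pos hL (h.contDiff_velocity.of_le one_le_two) h.periodic_velocity hu
  have hg : g ≠ 0 := fun hg => hh1V.ne' (by simp [hparab, hg])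
  set lam := h1V L u / l2V L u
  have hlam : 0 < lam := div_pos hh1V hl2V
  have hbuoy (x : E2) : θ x • gvec g = (ν * lam) • u x :=
    h.buoyancy_eq_smul_velocity hν hL hl2V.ne' hparab x
  have hu0 (x : E2) : u x 0 = 0 := by
    simpa [gvec, hν, hlam.ne'] using congrArg (· 0) (hbuoy x)
  have hθ (x : E2) : g * θ x = ν * lam * u x 1 := by
    simpa [gvec, mul_comm g] using congrArg (· 1) (hbuoy x)
  obtain ⟨n, hn⟩ := h.exists_nat_eigenvalue_eq hν hL hlam hu0 hθ hu
  refine ⟨hu0, fun x y hxy => ?_, ν * lam, 2 * n, ?_, hθ, fun x => ?_⟩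
  · have huxy := h.vertical_eq_of_apply_zero_eq hu0 hxy
    exact ⟨huxy, mul_left_cancel₀ hg (by rw [hθ, hθ, huxy])⟩
  · rw [hn]
    push_cast
    ring
  · rw [h.vertical_eigenfunction hν hL hu0 hθ, neg_neg, mul_div_cancel_left₀ _ hν]

/-- **Steady states on the boundary parabola of the energy–enstrophy region.**
Suppose `(u, θ)` is a smooth (nontrivial) steady state of the 2D semi-dissipative
Boussinesq system lying on the parabola `‖u‖²_{H¹} = (g‖θ₀‖_{L²}/ν) ‖u‖_{L²}`.
Then `u₁ ≡ 0`, both `u₂` and `θ` depend only on `x₁`, `gθ = c u₂` for a constant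
`c = ν n²π²/L²` for some `n ∈ ℕ`, and `u₂(x₁)` is an eigenfunction of `−∂²_{x₁}`
(periodic, mean-free). -/
theorem steady_states_on_parabola (ν g L : ℝ) (hν : 0 < ν) (hL : 0 < L) (hg : 0 < g)
    (u : E2 → E2) (θ p : E2 → ℝ)
    (hsol : Boussinesq ν g L Set.univ (fun _ => u) (fun _ => θ) (fun _ => p))
    (hu_sm : ContDiff ℝ (⊤ : ℕ∞) u) (hθ_sm : ContDiff ℝ (⊤ : ℕ∞) θ) (hp_sm : ContDiff ℝ (⊤ : ℕ∞) p)
    (hu_mf : MeanFreeV L u) (hθ_mf : MeanFreeS L θ)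
    (hu_ne : ∃ x, u x ≠ 0)
    -- the parabola `‖u‖²_{H¹} = (g ‖θ₀‖_{L²} / ν) ‖u‖_{L²}` :
    (hparab : h1V L u = (g * Real.sqrt (l2S L θ) / ν) * Real.sqrt (l2V L u)) :
    (∀ x : E2, u x 0 = 0) ∧
    (∀ x y : E2, x 0 = y 0 → u x 1 = u y 1 ∧ θ x = θ y) ∧
    (∃ (c : ℝ) (n : ℕ), c = ν * (n : ℝ) ^ 2 * Real.pi ^ 2 / L ^ 2 ∧
      (∀ x : E2, g * θ x = c * u x 1) ∧
      -- `u₂` is an eigenfunction of `−∂²_{x₁}` with eigenvalue `c/ν` :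
      (∀ x : E2, -(pd (fun y => pd (fun w => u w 1) 0 y) 0 x) = (c / ν) * u x 1)) :=
  steady_states_on_parabola_general hν.ne' hL
    (hsol.steadyFlow (contDiff_infty.1 hu_sm 2) hθ_sm.continuous (hp_sm.of_le (by simp)))
    hu_mf hu_ne hparab
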